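/- Let G : ℝⁿ × ℝⁿ → ℝⁿ be a C¹ map whose components are positively 2-homogeneous in the second variable, and let S be the associated spray S(x,y) = (y, −2G(x,y)). Suppose ω : ℝⁿ × ℝⁿ → (alternating bilinear forms on ℝⁿ × ℝⁿ) and a differentiable H : ℝⁿ × ℝⁿ → ℝ satisfy dH_u(δ/δx_i(u)) = ω_u(S(u), δ/δx_i(u)) for all u and all i. Then for every C² curve x : ℝ → ℝⁿ satisfying x''(t) = −2G(x(t), x'(t)) for all t, the function t ↦ H(x(t), x'(t)) is constant. -/

import Mathlib

/-- The semi-spray `S(x,y) = (y, -2 G(x,y))` associated to coefficient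
functions `G : ℝⁿ × ℝⁿ → ℝⁿ`. -/
noncomputable def spray (n : ℕ) (G : (Fin n → ℝ) × (Fin n → ℝ) → Fin n → ℝ) :
    (Fin n → ℝ) × (Fin n → ℝ) → (Fin n → ℝ) × (Fin n → ℝ) :=
  fun u => (u.2, fun a => -2 * G u a)

/-- The horizontal vector field `δ/δx_i(x,y) = (e_i, -(∂G¹/∂y_i, …, ∂Gⁿ/∂y_i))`
associated to the semi-spray with coefficients `G`. -/
noncomputable def horiz (n : ℕ) (G : (Fin n → ℝ) × (Fin n → ℝ) → Fin n → ℝ)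
    (i : Fin n) : (Fin n → ℝ) × (Fin n → ℝ) → (Fin n → ℝ) × (Fin n → ℝ) :=
  fun u => (Pi.single i 1, fun a => -(fderiv ℝ G u (0, Pi.single i 1) a))

/-!
The spray is its own horizontal lift: differentiating `G (x, l • y) = l ^ 2 • G (x, y)` at `l = 1`
gives Euler's identity `∂G/∂y (x, y) y = 2 G (x, y)`, so `S (x, y) = ∑ i, y i • δ/δx_i (x, y)`.
Hence the hypothesis on `dH` extends by linearity from the `δ/δx_i` to `S`, where it reads
`dH (S) = ω (S, S) = 0`. So `H` is a first integral of `S`, and `t ↦ (x t, x' t)` is an integral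
curve of `S`.
-/

section Calculus

variable {E F : Type*} [NormedAddCommGroup E] [NormedSpace ℝ E]
  [NormedAddCommGroup F] [NormedSpace ℝ F]

theorem fderiv_apply_self_of_posHomogeneous {f : E → F} {y : E} {p : ℝ}
    (hf : DifferentiableAt ℝ f y) (hhom : ∀ l : ℝ, 0 < l → f (l • y) = l ^ p • f y) :
    fderiv ℝ f y y = p • f y := by
  have along_ray : HasDerivAt (fun l : ℝ ↦ f (l • y)) (fderiv ℝ f y y) 1 := by
    have ray : HasDerivAt (fun l : ℝ ↦ l • y) y 1 := by
      simpa using (hasDerivAt_id (1 : ℝ)).smul_const y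
    exact hf.hasFDerivAt.comp_hasDerivAt_of_eq 1 ray (one_smul ℝ y).symm
  have of_power : HasDerivAt (fun l : ℝ ↦ l ^ p • f y) (p • f y) 1 := by
    simpa using (Real.hasDerivAt_rpow_const (p := p) (.inl one_ne_zero)).smul_const (f y)
  have agree : (fun l : ℝ ↦ f (l • y)) =ᶠ[nhds 1] fun l ↦ l ^ p • f y :=
    (lt_mem_nhds one_pos).mono hhom
  exact along_ray.unique (of_power.congr_of_eventuallyEq agree)

theorem hasFDerivAt_comp_prodMk_right {D : Type*} [NormedAddCommGroup D] [NormedSpace ℝ D]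
    {f : D × E → F} {u : D × E} (hf : DifferentiableAt ℝ f u) :
    HasFDerivAt (fun y ↦ f (u.1, y)) (fderiv ℝ f u ∘L ContinuousLinearMap.inr ℝ D E) u.2 :=
  hf.hasFDerivAt.comp u.2 (hasFDerivAt_prodMk_right u.1 u.2)

theorem eq_of_isIntegralCurveOn_of_fderiv_eq_zero {V : E → E} {H : E → F} {γ : ℝ → E} {I : Set ℝ}
    (hI : Convex ℝ I) (hγ : IsIntegralCurveOn γ (fun _ ↦ V) I)
    (hH : ∀ t ∈ I, DifferentiableAt ℝ H (γ t))
    (hV : ∀ t ∈ I, fderiv ℝ H (γ t) (V (γ t)) = 0) {s t : ℝ} (hs : s ∈ I) (ht : t ∈ I) :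
    H (γ s) = H (γ t) := by
  have deriv_zero : ∀ r ∈ I, HasDerivWithinAt (H ∘ γ) 0 I r := fun r hr ↦
    hV r hr ▸ (hH r hr).hasFDerivAt.comp_hasDerivWithinAt r (hγ r hr)
  have dist_le : ‖H (γ s) - H (γ t)‖ ≤ 0 * ‖s - t‖ :=
    hI.norm_image_sub_le_of_norm_hasDerivWithin_le deriv_zero (fun _ _ ↦ norm_zero.le) ht hs
  simpa [sub_eq_zero] using dist_le

end Calculus

section LinearAlgebra

variable {R V M N ι : Type*} [Semiring R] [AddCommMonoid V] [Module R V]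
  [AddCommMonoid M] [Module R M] [AddCommMonoid N] [Module R N]

theorem eq_alternatingMap_of_forall_basis (b : Module.Basis ι R V) (A : V →ₗ[R] M) (L : M →ₗ[R] N)
    (α : M [⋀^Fin 2]→ₗ[R] N) (w : M) (h : ∀ i, L (A (b i)) = α ![w, A (b i)]) (v : V) :
    L (A v) = α ![w, A v] := by
  have interior_apply (m : M) : α.toMultilinearMap.toLinearMap ![w, 0] 1 m = α ![w, m] := by
    have update_snd : Function.update ![w, 0] 1 m = ![w, m] := by
      ext j
      fin_cases j <;> rfl
    exact congrArg α update_snd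
  have agree : L ∘ₗ A = α.toMultilinearMap.toLinearMap ![w, 0] 1 ∘ₗ A :=
    b.ext fun i ↦ (h i).trans (interior_apply _).symm
  exact (LinearMap.congr_fun agree v).trans (interior_apply _)

end LinearAlgebra

section Semispray

variable {E F : Type*} [NormedAddCommGroup E] [NormedSpace ℝ E]
  [NormedAddCommGroup F] [NormedSpace ℝ F]

/-- The semi-spray `(x, y) ↦ (y, -2 G (x, y))` on the tangent bundle `E × E` of a normed space;
`spray` is the case `E = ℝⁿ`. -/
def semispray (G : E × E → E) (u : E × E) : E × E :=
  (u.2, (-2 : ℝ) • G u)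

/-- The horizontal lift `v ↦ (v, -∂G/∂y (u) v)` to the point `u = (x, y)` of the tangent bundle,
for the nonlinear connection of the semi-spray with coefficients `G`; on `ℝⁿ` it sends `e_i` to
`δ/δx_i`. Only the derivative of `G` along the fibre `{x} × E` enters. -/
noncomputable def horizontalLift (G : E × E → E) (u : E × E) : E →L[ℝ] E × E :=
  (ContinuousLinearMap.id ℝ E).prod (-fderiv ℝ (fun y ↦ G (u.1, y)) u.2)

theorem horizontalLift_snd_eq_semispray {G : E × E → E} {u : E × E}
    (hG : DifferentiableAt ℝ (fun y ↦ G (u.1, y)) u.2)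
    (hhom : ∀ l : ℝ, 0 < l → G (u.1, l • u.2) = l ^ 2 • G u) :
    horizontalLift G u u.2 = semispray G u := by
  have euler : fderiv ℝ (fun y ↦ G (u.1, y)) u.2 u.2 = (2 : ℝ) • G u :=
    fderiv_apply_self_of_posHomogeneous hG fun l hl ↦ by
      rw [Real.rpow_two]
      exact hhom l hl
  simp [horizontalLift, semispray, euler]

theorem isIntegralCurve_semispray {G : E × E → E} {x : ℝ → E} (hx : ContDiff ℝ 2 x)
    (hode : ∀ t, deriv (deriv x) t = (-2 : ℝ) • G (x t, deriv x t)) :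
    IsIntegralCurve (fun t ↦ (x t, deriv x t)) fun _ ↦ semispray G := by
  intro t
  have hx' : DifferentiableAt ℝ (deriv x) t := hx.differentiable_deriv_two t
  have acceleration : HasDerivAt (deriv x) ((-2 : ℝ) • G (x t, deriv x t)) t :=
    hode t ▸ hx'.hasDerivAt
  exact (hx.differentiable two_ne_zero t).hasDerivAt.prodMk acceleration

theorem spray_constant_along_solutions_general {G : E × E → E}
    (hG : ∀ u : E × E, DifferentiableAt ℝ (fun y ↦ G (u.1, y)) u.2)
    (hhom : ∀ (x y : E) (l : ℝ), 0 < l → G (x, l • y) = l ^ 2 • G (x, y))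
    (ω : E × E → (E × E) [⋀^Fin 2]→ₗ[ℝ] F) {H : E × E → F} (hH : Differentiable ℝ H)
    (hmain : ∀ u v, fderiv ℝ H u (horizontalLift G u v) =
      ω u ![semispray G u, horizontalLift G u v])
    {γ : ℝ → E × E} {I : Set ℝ} (hI : Convex ℝ I)
    (hγ : IsIntegralCurveOn γ (fun _ ↦ semispray G) I) {s t : ℝ} (hs : s ∈ I) (ht : t ∈ I) :
    H (γ s) = H (γ t) := by
  have fderiv_semispray (u : E × E) : fderiv ℝ H u (semispray G u) = 0 := by
    have lift_eq : horizontalLift G u u.2 = semispray G u :=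
      horizontalLift_snd_eq_semispray (hG u) (hhom u.1 u.2)
    calc fderiv ℝ H u (semispray G u)
      _ = ω u ![semispray G u, semispray G u] := by simpa only [lift_eq] using hmain u u.2
      _ = 0 := (ω u).map_eq_zero_of_eq _ (i := 0) (j := 1) rfl zero_ne_one
  exact eq_of_isIntegralCurveOn_of_fderiv_eq_zero hI hγ (fun r _ ↦ hH (γ r))
    (fun r _ ↦ fderiv_semispray (γ r)) hs ht

end Semispray

section Coordinates

variable {n : ℕ} {G : (Fin n → ℝ) × (Fin n → ℝ) → Fin n → ℝ}

theorem semispray_eq_spray : semispray G = spray n G := rfl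

theorem horizontalLift_single {u : (Fin n → ℝ) × (Fin n → ℝ)} (hG : DifferentiableAt ℝ G u)
    (i : Fin n) : horizontalLift G u (Pi.single i 1) = horiz n G i u := by
  rw [horizontalLift, (hasFDerivAt_comp_prodMk_right hG).fderiv]
  rfl

theorem eq_alternatingMap_horizontalLift_of_forall_horiz {u : (Fin n → ℝ) × (Fin n → ℝ)}
    (hG : DifferentiableAt ℝ G u) {L : (Fin n → ℝ) × (Fin n → ℝ) →L[ℝ] ℝ}
    {α : ((Fin n → ℝ) × (Fin n → ℝ)) [⋀^Fin 2]→ₗ[ℝ] ℝ}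
    (h : ∀ i, L (horiz n G i u) = α ![spray n G u, horiz n G i u]) (v : Fin n → ℝ) :
    L (horizontalLift G u v) = α ![semispray G u, horizontalLift G u v] := by
  refine eq_alternatingMap_of_forall_basis (Pi.basisFun ℝ (Fin n))
    (horizontalLift G u).toLinearMap L.toLinearMap α (semispray G u) (fun i ↦ ?_) v
  simpa [horizontalLift_single hG, semispray_eq_spray] using h i

end Coordinates

/-- under the hypotheses of Statement 0, the function
`t ↦ H(x(t), x'(t))` is constant along every `C²` solution of
`x''(t) = -2 G(x(t), x'(t))`. -/
theorem spray_constant_along_solutions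
    (n : ℕ) (G : (Fin n → ℝ) × (Fin n → ℝ) → Fin n → ℝ)
    (hG : ContDiff ℝ 1 G)
    (hhom : ∀ (x y : Fin n → ℝ) (l : ℝ), 0 < l → G (x, l • y) = l ^ 2 • G (x, y))
    (ω : (Fin n → ℝ) × (Fin n → ℝ) →
      ((Fin n → ℝ) × (Fin n → ℝ)) [⋀^Fin 2]→ₗ[ℝ] ℝ)
    (H : (Fin n → ℝ) × (Fin n → ℝ) → ℝ) (hH : Differentiable ℝ H)
    (hmain : ∀ u, ∀ i : Fin n,
      fderiv ℝ H u (horiz n G i u) = ω u ![spray n G u, horiz n G i u]) :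
    ∀ x : ℝ → Fin n → ℝ, ContDiff ℝ 2 x →
      (∀ t : ℝ, deriv (deriv x) t = fun a => -2 * G (x t, deriv x t) a) →
      ∀ s t : ℝ, H (x s, deriv x s) = H (x t, deriv x t) := by
  intro x hx hode s t
  have hdiff : Differentiable ℝ G := hG.differentiable one_ne_zero
  exact spray_constant_along_solutions_general
    (fun u ↦ (hasFDerivAt_comp_prodMk_right (hdiff u)).differentiableAt) hhom ω hH
    (fun u ↦ eq_alternatingMap_horizontalLift_of_forall_horiz (hdiff u) (hmain u)) convex_univ
    ((isIntegralCurve_semispray hx hode).isIntegralCurveOn _) (Set.mem_univ s) (Set.mem_univ t)
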